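/- arXiv:1106.4822 — 4 statements merged into one kernel-verified Lean document; each statement's English description precedes it below -/
import Mathlib

section
/- Under the LCC setup, for every m, every j ≥ 1 and every bounded linear operator L : X_m → X_m one has w_{m+j}(L) ≤ w_{m+j+1}(L); that is, the sequence j ↦ w_{m+j}(L) is nondecreasing. -/
open Filter Topology

variable {X : Type*} [NormedAddCommGroup X] [NormedSpace ℝ X]

/-- The numerical radius of a bounded linear operator on a real normed space. -/
noncomputable def nu {Z : Type*} [NormedAddCommGroup Z] [NormedSpace ℝ Z] (T : Z →L[ℝ] Z) : ℝ :=
  sSup {r : ℝ | ∃ (x : Z) (f : Z →L[ℝ] ℝ), ‖x‖ = 1 ∧ ‖f‖ = 1 ∧ f x = 1 ∧ r = |f (T x)|}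

/-- The numerical index of a real normed space. -/
noncomputable def nIndex (Z : Type*) [NormedAddCommGroup Z] [NormedSpace ℝ Z] : ℝ :=
  sInf {r : ℝ | ∃ T : Z →L[ℝ] Z, ‖T‖ = 1 ∧ r = nu T}

/-- The (continuous) inclusion map between nested submodules. -/
noncomputable def incl {p q : Submodule ℝ X} (h : p ≤ q) : p →L[ℝ] q :=
  (Submodule.inclusion h).mkContinuous 1 (fun x => by rw [one_mul]; exact le_of_eq rfl)

/-- `QQ Xm P m j = Q_{m,j} = P_m ∘ P_{m+1} ∘ ⋯ ∘ P_{m+j-1} : X_{m+j} → X_m`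
(with `Q_{m,0} = id`). -/
noncomputable def QQ (Xm : ℕ → Submodule ℝ X) (P : ∀ m, Xm (m + 1) →L[ℝ] Xm m) (m : ℕ) :
    ∀ j, Xm (m + j) →L[ℝ] Xm m
  | 0 => ContinuousLinearMap.id ℝ (Xm m)
  | (j + 1) => (QQ Xm P m j).comp (P (m + j))

/-- `w Xm hmono P m j L = w_{m+j}(L) = ν(ι ∘ L ∘ Q_{m,j})`, the numerical radius in
`X_{m+j}` of the operator `x ↦ L (Q_{m,j} x)`. -/
noncomputable def w (Xm : ℕ → Submodule ℝ X) (hmono : Monotone Xm)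
    (P : ∀ m, Xm (m + 1) →L[ℝ] Xm m) (m j : ℕ) (L : Xm m →L[ℝ] Xm m) : ℝ :=
  nu ((incl (hmono (Nat.le_add_right m j))).comp (L.comp (QQ Xm P m j)))

/-- The Local Characterization Condition (LCC): for every `m`, every norming functional
`f ∈ X_{m+1}*` of a unit vector `x ∈ X_{m+1}`, some multiple of `f` restricted to `X_m`
is a norming functional for `P_m x` in `X_m*`. -/
def LCC (Xm : ℕ → Submodule ℝ X) (hmono : Monotone Xm)
    (P : ∀ m, Xm (m + 1) →L[ℝ] Xm m) : Prop :=
  ∀ (m : ℕ) (x : Xm (m + 1)) (f : Xm (m + 1) →L[ℝ] ℝ), ‖x‖ = 1 → ‖f‖ = 1 → f x = 1 →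
    ∃ b : ℝ, ‖b • f.comp (incl (hmono (Nat.le_succ m)))‖ = 1 ∧
      b * f (incl (hmono (Nat.le_succ m)) (P m x)) = ‖P m x‖

/-- Under the LCC setup, the sequence `j ↦ w_{m+j}(L)` is nondecreasing for `j ≥ 1`. -/
theorem stmt9 [CompleteSpace X]
    (Xm : ℕ → Submodule ℝ X) (hmono : Monotone Xm)
    (hclosed : ∀ m, IsClosed (Xm m : Set X))
    (hdense : Dense (⋃ m, (Xm m : Set X)))
    (P : ∀ m, Xm (m + 1) →L[ℝ] Xm m)
    (hPnorm : ∀ m, ‖P m‖ = 1)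
    (hPid : ∀ (m : ℕ) (y : Xm (m + 1)), (y : X) ∈ Xm m → ((P m y : Xm m) : X) = (y : X)) :
    ∀ (m : ℕ) (j : ℕ), 1 ≤ j → ∀ L : Xm m →L[ℝ] Xm m,
      w Xm hmono P m j L ≤ w Xm hmono P m (j + 1) L := by
  intro m j _ L
  have hcoe : ∀ {p q : Submodule ℝ X} (h : p ≤ q) (x : p), ((incl h x : q) : X) = (x : X) :=
    fun h x => rfl
  have hPincl : ∀ x : Xm (m + j), P (m + j) (incl (hmono (Nat.le_succ (m + j))) x) = x := by
    intro x
    apply Subtype.ext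
    rw [hPid (m + j) _ (by rw [hcoe]; exact x.2), hcoe]
  unfold w nu
  apply Real.sSup_le
  · rintro r ⟨x, f, hx, hf, hfx, rfl⟩
    apply le_csSup
    · set T := (incl (hmono (Nat.le_add_right m (j + 1)))).comp (L.comp (QQ Xm P m (j + 1)))
      refine ⟨‖T‖, ?_⟩
      rintro r ⟨y, g, hy, hg, -, rfl⟩
      calc |g (T y)| = ‖g (T y)‖ := (Real.norm_eq_abs _).symm
        _ ≤ ‖g‖ * ‖T y‖ := g.le_opNorm _
        _ = ‖T y‖ := by rw [hg, one_mul]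
        _ ≤ ‖T‖ * ‖y‖ := T.le_opNorm _
        _ = ‖T‖ := by rw [hy, mul_one]
    · have hy : ‖incl (hmono (Nat.le_succ (m + j))) x‖ = 1 := hx
      have hg1 : (f.comp (P (m + j))) (incl (hmono (Nat.le_succ (m + j))) x) = 1 := by
        rw [ContinuousLinearMap.comp_apply, hPincl, hfx]
      refine ⟨incl (hmono (Nat.le_succ (m + j))) x, f.comp (P (m + j)), hy, ?_, hg1, ?_⟩
      · apply le_antisymm
        · have := f.opNorm_comp_le (P (m + j))
          rwa [hf, hPnorm, one_mul] at this
        · have := (f.comp (P (m + j))).le_opNorm (incl (hmono (Nat.le_succ (m + j))) x)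
          rwa [hg1, hy, mul_one, norm_one] at this
      · have e1 : QQ Xm P m (j + 1) (incl (hmono (Nat.le_succ (m + j))) x) = QQ Xm P m j x := by
          change QQ Xm P m j (P (m + j) (incl (hmono (Nat.le_succ (m + j))) x)) = _
          rw [hPincl]
        have e2 : ∀ z : Xm m, P (m + j) (incl (hmono (Nat.le_add_right m (j + 1))) z)
            = incl (hmono (Nat.le_add_right m j)) z := fun z =>
          hPincl (incl (hmono (Nat.le_add_right m j)) z)
        change _ = |f (P (m + j) (incl (hmono (Nat.le_add_right m (j + 1)))
          (L (QQ Xm P m (j + 1) (incl (hmono (Nat.le_succ (m + j))) x)))))|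
        rw [e1, e2]
        rfl
  · apply Real.sSup_nonneg
    rintro r ⟨y, g, -, -, -, rfl⟩
    exact abs_nonneg _
end

section
/- Under the LCC setup, for each m there exists a bounded linear map Q_m : X → X_m with ‖Q_m‖ = 1 which restricts to the identity on X_m, such that for every k and every x ∈ X_k one has Q_{m,j} x = Q_m x for all sufficiently large j; in particular Q_{m,j} x → Q_m x as j → ∞ for every x in the union of the X_n. -/
open Filter Topology

variable {X : Type*} [NormedAddCommGroup X] [NormedSpace ℝ X]

/-- One more projection does not change the value. -/
lemma QQ_succ_apply (Xm : ℕ → Submodule ℝ X)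
    (P : ∀ m, Xm (m + 1) →L[ℝ] Xm m)
    (hPid : ∀ (m : ℕ) (y : Xm (m + 1)), (y : X) ∈ Xm m → ((P m y : Xm m) : X) = (y : X))
    (m j : ℕ) (x : X) (h : x ∈ Xm (m + j)) (h' : x ∈ Xm (m + (j + 1))) :
    QQ Xm P m (j + 1) ⟨x, h'⟩ = QQ Xm P m j ⟨x, h⟩ := by
  change QQ Xm P m j (P (m + j) ⟨x, h'⟩) = _
  congr 1
  exact Subtype.ext (hPid (m + j) ⟨x, h'⟩ h)

lemma QQ_add_apply (Xm : ℕ → Submodule ℝ X) (hmono : Monotone Xm)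
    (P : ∀ m, Xm (m + 1) →L[ℝ] Xm m)
    (hPid : ∀ (m : ℕ) (y : Xm (m + 1)), (y : X) ∈ Xm m → ((P m y : Xm m) : X) = (y : X))
    (m j : ℕ) (x : X) (h : x ∈ Xm (m + j)) (i : ℕ) (hji : j ≤ i) :
    ∀ (h' : x ∈ Xm (m + i)), QQ Xm P m i ⟨x, h'⟩ = QQ Xm P m j ⟨x, h⟩ := by
  induction i, hji using Nat.le_induction with
  | base => intro _; rfl
  | succ n hn ih =>
    intro h'
    have h'' : x ∈ Xm (m + n) := hmono (by omega) h
    rw [QQ_succ_apply Xm P hPid m n x h'' h', ih h'']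

lemma QQ_stable (Xm : ℕ → Submodule ℝ X) (hmono : Monotone Xm)
    (P : ∀ m, Xm (m + 1) →L[ℝ] Xm m)
    (hPid : ∀ (m : ℕ) (y : Xm (m + 1)), (y : X) ∈ Xm m → ((P m y : Xm m) : X) = (y : X))
    (m j i : ℕ) (x : X) (h : x ∈ Xm (m + j)) (h' : x ∈ Xm (m + i)) :
    QQ Xm P m i ⟨x, h'⟩ = QQ Xm P m j ⟨x, h⟩ := by
  rcases le_total j i with hji | hji
  · exact QQ_add_apply Xm hmono P hPid m j x h i hji h'
  · exact (QQ_add_apply Xm hmono P hPid m i x h' j hji h).symm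

lemma QQ_norm_le (Xm : ℕ → Submodule ℝ X)
    (P : ∀ m, Xm (m + 1) →L[ℝ] Xm m) (hPnorm : ∀ m, ‖P m‖ = 1) (m j : ℕ) :
    ∀ x : Xm (m + j), ‖QQ Xm P m j x‖ ≤ ‖x‖ := by
  induction j with
  | zero => intro x; exact le_of_eq rfl
  | succ n ih =>
    intro x
    refine (ih (P (m + n) x)).trans ?_
    have := (P (m + n)).le_opNorm x
    rw [hPnorm, one_mul] at this
    exact this

/-- Under the LCC setup, for each `m` there is a norm-one bounded linear map
`Q_m : X → X_m` restricting to the identity on `X_m`, such that for every `k` and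
every `x ∈ X_k`, `Q_{m,j} x = Q_m x` for all sufficiently large `j`. -/
theorem stmt11 [CompleteSpace X]
    (Xm : ℕ → Submodule ℝ X) (hmono : Monotone Xm)
    (hclosed : ∀ m, IsClosed (Xm m : Set X))
    (hdense : Dense (⋃ m, (Xm m : Set X)))
    (P : ∀ m, Xm (m + 1) →L[ℝ] Xm m)
    (hPnorm : ∀ m, ‖P m‖ = 1)
    (hPid : ∀ (m : ℕ) (y : Xm (m + 1)), (y : X) ∈ Xm m → ((P m y : Xm m) : X) = (y : X)) :
    ∀ m : ℕ, ∃ Qm : X →L[ℝ] Xm m, ‖Qm‖ = 1 ∧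
      (∀ x : X, x ∈ Xm m → ((Qm x : X) = x)) ∧
      ∀ (k : ℕ) (x : X), x ∈ Xm k → ∃ J : ℕ, ∀ j, J ≤ j →
        ∃ h : x ∈ Xm (m + j), QQ Xm P m j ⟨x, h⟩ = Qm x := by
  intro m
  have hdir : Directed (· ≤ ·) Xm := hmono.directed_le
  set U : Submodule ℝ X := ⨆ n, Xm n with hU
  have hmemU : ∀ x : X, x ∈ U ↔ ∃ n, x ∈ Xm n := fun x =>
    Submodule.mem_iSup_of_directed Xm hdir
  have hex : ∀ x : U, ∃ j, (x : X) ∈ Xm (m + j) := by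
    intro x
    obtain ⟨n, hn⟩ := (hmemU x).1 x.2
    exact ⟨n, hmono (by omega) hn⟩
  choose J hJ using hex
  have key : ∀ (x : U) (j : ℕ) (h : (x : X) ∈ Xm (m + j)),
      QQ Xm P m (J x) ⟨x, hJ x⟩ = QQ Xm P m j ⟨x, h⟩ := fun x j h =>
    QQ_stable Xm hmono P hPid m j (J x) x h (hJ x)
  let g : U →ₗ[ℝ] Xm m :=
    { toFun := fun x => QQ Xm P m (J x) ⟨x, hJ x⟩
      map_add' := by
        intro x y
        have hx : (x : X) ∈ Xm (m + (J x + J y)) := hmono (by omega) (hJ x)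
        have hy : (y : X) ∈ Xm (m + (J x + J y)) := hmono (by omega) (hJ y)
        rw [key x _ hx, key y _ hy, key (x + y) _ (Submodule.add_mem _ hx hy), ← map_add]
        rfl
      map_smul' := by
        intro c x
        rw [key (c • x) _ (Submodule.smul_mem _ c (hJ x)), RingHom.id_apply, ← map_smul]
        rfl }
  have hg : ∀ x : U, ‖g x‖ ≤ 1 * ‖x‖ := by
    intro x
    rw [one_mul]
    exact QQ_norm_le Xm P hPnorm m (J x) ⟨x, hJ x⟩
  let G : U →L[ℝ] Xm m := g.mkContinuous 1 hg
  have : CompleteSpace (Xm m) := (hclosed m).completeSpace_coe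
  have hdr : DenseRange (U.subtypeL : U →L[ℝ] X) := by
    have : Set.range (U.subtypeL : U →L[ℝ] X) = ⋃ n, (Xm n : Set X) := by
      ext x
      simp only [Set.mem_iUnion, SetLike.mem_coe, ← hmemU]
      simp
    rw [DenseRange, this]
    exact hdense
  have hui : IsUniformInducing (U.subtypeL : U →L[ℝ] X) :=
    isUniformEmbedding_subtype_val.isUniformInducing
  let Q : X →L[ℝ] Xm m := G.extend U.subtypeL
  have hQ : ∀ x : U, Q (x : X) = g x := fun x => G.extend_eq hdr hui x
  have hQQ : ∀ (j : ℕ) (x : X) (h : x ∈ Xm (m + j)), QQ Xm P m j ⟨x, h⟩ = Q x := by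
    intro j x h
    have := hQ ⟨x, (hmemU x).2 ⟨_, h⟩⟩
    exact (this.trans (key ⟨x, (hmemU x).2 ⟨_, h⟩⟩ j h)).symm
  have hid : ∀ x : X, x ∈ Xm m → ((Q x : X) = x) := by
    intro x hx
    rw [← hQQ 0 x hx]
    rfl
  have hle : ‖Q‖ ≤ 1 := by
    refine Q.opNorm_le_bound zero_le_one fun x => ?_
    refine hdr.induction_on (p := fun x => ‖Q x‖ ≤ 1 * ‖x‖) x
      (isClosed_le (by fun_prop) (by fun_prop)) fun y => ?_
    change ‖Q (y : X)‖ ≤ _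
    rw [hQ]
    exact hg y
  have hge : 1 ≤ ‖Q‖ := by
    have hne : ∃ v : Xm m, v ≠ 0 := by
      by_contra hcon
      push Not at hcon
      have hz : ‖P m‖ ≤ 0 := by
        refine (P m).opNorm_le_bound le_rfl fun x => ?_
        rw [hcon (P m x), norm_zero, zero_mul]
      have := hPnorm m
      linarith
    obtain ⟨v, hv⟩ := hne
    have h1 := Q.le_opNorm (v : X)
    have h2 : ‖Q (v : X)‖ = ‖(v : X)‖ := by
      exact congrArg (fun z : X => ‖z‖) (hid v v.2)
    rw [h2] at h1
    have h3 : 0 < ‖(v : X)‖ := norm_pos_iff.2 (by simpa using hv)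
    nlinarith
  refine ⟨Q, le_antisymm hle hge, hid, fun k x hx => ⟨k, fun j hj => ?_⟩⟩
  have h : x ∈ Xm (m + j) := hmono (by omega) hx
  exact ⟨h, hQQ j x h⟩
end

section
/- Let X be an infinite-dimensional real Banach space and let Y ⊆ X be a linear subspace whose norm-closure equals X. Then for every bounded linear operator L : X → X, ν(L) = sup{|f(L y)| : y ∈ Y, ‖y‖ = 1, f ∈ X*, ‖f‖ = 1, f(y) = 1}. -/
theorem aux_bound {X : Type*} [NormedAddCommGroup X] [NormedSpace ℝ X]
    (Y : Submodule ℝ X) (hY : Dense (Y : Set X)) (L : X →L[ℝ] X) (s : ℝ)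
    (hP : ∀ y ∈ Y, ‖y‖ = 1 → ∀ f : X →L[ℝ] ℝ, ‖f‖ = 1 → f y = 1 → f (L y) ≤ s)
    (hs : 0 ≤ s) (x : X) (f : X →L[ℝ] ℝ) (hx : ‖x‖ = 1) (hf : ‖f‖ = 1) (hfx : f x = 1) :
    f (L x) ≤ s := by
  have key : ∀ t : ℝ, 0 < t → ∀ z : X, (1 - t * s) * ‖z‖ ≤ ‖z - t • L z‖ := by
    intro t ht z
    have hc : IsClosed {z : X | (1 - t * s) * ‖z‖ ≤ ‖z - t • L z‖} :=
      isClosed_le (by fun_prop) (by fun_prop)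
    refine hc.closure_subset_iff.2 ?_ (hY z)
    intro y hy
    show (1 - t * s) * ‖y‖ ≤ ‖y - t • L y‖
    by_cases h0 : y = 0
    · simp [h0]
    have hn : 0 < ‖y‖ := norm_pos_iff.2 h0
    obtain ⟨g, hg, hgy⟩ := exists_dual_vector ℝ y hn.ne'
    have hgy' : g y = ‖y‖ := by simpa using hgy
    have h1 := hP (‖y‖⁻¹ • y) (Y.smul_mem _ hy)
      (by rw [norm_smul, norm_inv, norm_norm, inv_mul_cancel₀ hn.ne']) g hg
      (by rw [map_smul, hgy', smul_eq_mul, inv_mul_cancel₀ hn.ne'])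
    rw [map_smul, map_smul, smul_eq_mul, inv_mul_le_iff₀ hn] at h1
    have h2 : g (y - t • L y) ≤ ‖y - t • L y‖ := by
      have := g.le_opNorm (y - t • L y)
      rw [hg, one_mul] at this
      exact (le_abs_self _).trans this
    rw [map_sub, map_smul, smul_eq_mul, hgy'] at h2
    nlinarith [mul_le_mul_of_nonneg_left h1 ht.le]
  have main : ∀ t : ℝ, 0 < t → t * s ≤ 1 → f (L x) ≤ s + t * (‖L (L x)‖ + s * f (L x)) := by
    intro t ht hts
    have h1 := key t ht (x + t • L x)
    have e : x + t • L x - t • L (x + t • L x) = x - (t * t) • L (L x) := by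
      simp only [map_add, map_smul, smul_add, smul_smul]; abel
    rw [e] at h1
    have h2 : ‖x - (t * t) • L (L x)‖ ≤ 1 + t * t * ‖L (L x)‖ := by
      refine (norm_sub_le _ _).trans ?_
      rw [hx, norm_smul, Real.norm_of_nonneg (by positivity)]
    have h3 : 1 + t * f (L x) ≤ ‖x + t • L x‖ := by
      have := f.le_opNorm (x + t • L x)
      rw [hf, one_mul] at this
      have h := (le_abs_self _).trans this
      rwa [map_add, map_smul, smul_eq_mul, hfx] at h
    have h4 := mul_le_mul_of_nonneg_left h3 (sub_nonneg.2 hts)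
    have h5 : t * f (L x) ≤ t * (s + t * (‖L (L x)‖ + s * f (L x))) := by nlinarith
    exact le_of_mul_le_mul_left h5 ht
  have hlim : Filter.Tendsto (fun t : ℝ => s + t * (‖L (L x)‖ + s * f (L x)))
      (nhdsWithin 0 (Set.Ioi 0)) (nhds s) := by
    have : Continuous (fun t : ℝ => s + t * (‖L (L x)‖ + s * f (L x))) := by fun_prop
    have h := this.tendsto 0
    simp only [zero_mul, add_zero] at h
    exact h.mono_left nhdsWithin_le_nhds
  refine ge_of_tendsto hlim ?_
  have hpos : (0 : ℝ) < 1 / (s + 1) := by positivity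
  filter_upwards [Ioo_mem_nhdsGT hpos] with t ht
  refine main t ht.1 ?_
  have := (lt_div_iff₀ (by positivity)).1 ht.2
  nlinarith [ht.1]

/-- Let `X` be an infinite-dimensional real Banach space and `Y ⊆ X` a dense linear
subspace. Then for every bounded linear operator `L : X → X`, the numerical radius
`ν(L)` equals the sup of `|f (L y)|` over unit vectors `y ∈ Y` and norming functionals
`f` of `y`. -/
theorem stmt13 {X : Type*} [NormedAddCommGroup X] [NormedSpace ℝ X] [CompleteSpace X]
    (hinf : ¬ FiniteDimensional ℝ X)
    (Y : Submodule ℝ X) (hY : Dense (Y : Set X))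
    (L : X →L[ℝ] X) :
    nu L = sSup {r : ℝ | ∃ y : X, y ∈ Y ∧ ‖y‖ = 1 ∧
      ∃ f : X →L[ℝ] ℝ, ‖f‖ = 1 ∧ f y = 1 ∧ r = |f (L y)|} := by
  have bdd : ∀ (x : X) (f : X →L[ℝ] ℝ), ‖x‖ = 1 → ‖f‖ = 1 → |f (L x)| ≤ ‖L‖ := by
    intro x f hx hf
    have h1 := f.le_opNorm (L x)
    have h2 := L.le_opNorm x
    rw [hf, one_mul] at h1
    rw [hx, mul_one] at h2
    exact h1.trans h2
  unfold nu
  apply le_antisymm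
  · set s := sSup {r : ℝ | ∃ y : X, y ∈ Y ∧ ‖y‖ = 1 ∧
      ∃ f : X →L[ℝ] ℝ, ‖f‖ = 1 ∧ f y = 1 ∧ r = |f (L y)|} with hsdef
    have hs : 0 ≤ s := by
      apply Real.sSup_nonneg
      rintro r ⟨y, -, -, f, -, -, rfl⟩
      exact abs_nonneg _
    have hP : ∀ y ∈ Y, ‖y‖ = 1 → ∀ f : X →L[ℝ] ℝ, ‖f‖ = 1 → f y = 1 → |f (L y)| ≤ s := by
      intro y hy hy1 f hf hfy
      refine le_csSup ⟨‖L‖, ?_⟩ ⟨y, hy, hy1, f, hf, hfy, rfl⟩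
      rintro r ⟨y, -, hy, f, hf, -, rfl⟩
      exact bdd y f hy hf
    apply Real.sSup_le _ hs
    rintro r ⟨x, f, hx, hf, hfx, rfl⟩
    refine abs_le'.2 ⟨?_, ?_⟩
    · exact aux_bound Y hY L s (fun y hy h1 g hg hgy =>
        (le_abs_self _).trans (hP y hy h1 g hg hgy)) hs x f hx hf hfx
    · have := aux_bound Y hY (-L) s (fun y hy h1 g hg hgy => by
        have := (neg_le_abs _).trans (hP y hy h1 g hg hgy)
        simpa using this) hs x f hx hf hfx
      simpa using this
  · apply Real.sSup_le
    · rintro r ⟨y, -, hy, f, hf, hfy, rfl⟩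
      refine le_csSup ⟨‖L‖, ?_⟩ ⟨y, f, hy, hf, hfy, rfl⟩
      rintro r ⟨y, f, hy, hf, -, rfl⟩
      exact bdd y f hy hf
    · apply Real.sSup_nonneg
      rintro r ⟨y, f, -, -, -, rfl⟩
      exact abs_nonneg _
end

section
/- Under the LCC setup, for every m and every bounded linear operator L : X_m → X_m, the sequence j ↦ w_{m+j}(L) converges and lim_{j→∞} w_{m+j}(L) = ν(ι ∘ L ∘ Q_m), where ν(ι ∘ L ∘ Q_m) is the numerical radius in X of the operator x ↦ L(Q_m x) (regarded as an operator on X via the inclusion ι : X_m ⊆ X). -/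
open Filter Topology

variable {X : Type*} [NormedAddCommGroup X] [NormedSpace ℝ X]

lemma nu_bdd {Z : Type*} [NormedAddCommGroup Z] [NormedSpace ℝ Z] (T : Z →L[ℝ] Z) :
    BddAbove {r : ℝ | ∃ (x : Z) (f : Z →L[ℝ] ℝ), ‖x‖ = 1 ∧ ‖f‖ = 1 ∧ f x = 1 ∧
      r = |f (T x)|} := by
  refine ⟨‖T‖, ?_⟩
  rintro r ⟨x, f, hx, hf, -, rfl⟩
  calc |f (T x)| ≤ ‖f‖ * ‖T x‖ := f.le_opNorm _
    _ ≤ ‖f‖ * (‖T‖ * ‖x‖) := by gcongr; exact T.le_opNorm x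
    _ = ‖T‖ := by rw [hf, hx]; ring

lemma le_nu {Z : Type*} [NormedAddCommGroup Z] [NormedSpace ℝ Z] (T : Z →L[ℝ] Z)
    (x : Z) (f : Z →L[ℝ] ℝ) (hx : ‖x‖ = 1) (hf : ‖f‖ = 1) (h : f x = 1) :
    |f (T x)| ≤ nu T :=
  le_csSup (nu_bdd T) ⟨x, f, hx, hf, h, rfl⟩

lemma nu_nonneg {Z : Type*} [NormedAddCommGroup Z] [NormedSpace ℝ Z] (T : Z →L[ℝ] Z) :
    0 ≤ nu T := by
  apply Real.sSup_nonneg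
  rintro r ⟨x, f, -, -, -, rfl⟩
  exact abs_nonneg _

lemma nu_le {Z : Type*} [NormedAddCommGroup Z] [NormedSpace ℝ Z] (T : Z →L[ℝ] Z) (c : ℝ)
    (hc : 0 ≤ c) (H : ∀ (x : Z) (f : Z →L[ℝ] ℝ), ‖x‖ = 1 → ‖f‖ = 1 → f x = 1 → |f (T x)| ≤ c) :
    nu T ≤ c := by
  apply Real.sSup_le _ hc
  rintro r ⟨x, f, h1, h2, h3, rfl⟩
  exact H x f h1 h2 h3

lemma lumer1 {Z : Type*} [NormedAddCommGroup Z] [NormedSpace ℝ Z] (T : Z →L[ℝ] Z) (c : ℝ)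
    (hc : nu T ≤ c) (t : ℝ) (u : Z) : (1 - |t| * c) * ‖u‖ ≤ ‖u - t • T u‖ := by
  by_cases hu : u = 0
  · simp [hu]
  have hn : 0 < ‖u‖ := norm_pos_iff.mpr hu
  obtain ⟨f, hf, hfu⟩ := exists_dual_vector ℝ u hn.ne'
  have hfu' : f u = ‖u‖ := by simpa using hfu
  have h1 := (le_nu T (‖u‖⁻¹ • u) f (by rw [norm_smul]; simp [hn.ne']) hf
    (by rw [map_smul, hfu', smul_eq_mul]; field_simp)).trans hc
  rw [map_smul, map_smul, smul_eq_mul, abs_mul, abs_of_pos (inv_pos.mpr hn),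
    inv_mul_le_iff₀ hn] at h1
  have h2 : f (u - t • T u) ≤ ‖u - t • T u‖ := by
    have := f.le_opNorm (u - t • T u)
    rw [hf, one_mul] at this
    exact (le_abs_self _).trans this
  rw [map_sub, map_smul, hfu', smul_eq_mul] at h2
  have h3 : t * f (T u) ≤ |t| * (‖u‖ * c) := by
    calc t * f (T u) ≤ |t * f (T u)| := le_abs_self _
      _ = |t| * |f (T u)| := abs_mul _ _
      _ ≤ _ := by gcongr
  nlinarith

lemma lumer2 {Z : Type*} [NormedAddCommGroup Z] [NormedSpace ℝ Z] (T : Z →L[ℝ] Z) (c C : ℝ)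
    (hc : nu T ≤ c) (hC : ∀ z, ‖T z‖ ≤ C * ‖z‖) (hC0 : 0 ≤ C) (t : ℝ) (z : Z) :
    (1 - |t| * c) * ‖z + t • T z‖ ≤ (1 + t ^ 2 * C ^ 2) * ‖z‖ := by
  refine (lumer1 T c hc t _).trans ?_
  have e : z + t • T z - t • T (z + t • T z) = z - (t ^ 2) • T (T z) := by
    rw [map_add, map_smul, smul_add, smul_smul, pow_two]; abel
  rw [e]
  refine (norm_sub_le _ _).trans ?_
  rw [norm_smul, Real.norm_of_nonneg (sq_nonneg t)]
  have h1 : ‖T (T z)‖ ≤ C * (C * ‖z‖) := (hC _).trans (by gcongr; exact hC z)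
  have := mul_le_mul_of_nonneg_left h1 (sq_nonneg t)
  nlinarith

/-- Under the LCC setup, the sequence `j ↦ w_{m+j}(L)` converges to `ν(ι ∘ L ∘ Q_m)`,
the numerical radius in `X` of `x ↦ L (Q_m x)`. -/
theorem stmt14 [CompleteSpace X]
    (Xm : ℕ → Submodule ℝ X) (hmono : Monotone Xm)
    (hclosed : ∀ m, IsClosed (Xm m : Set X))
    (hdense : Dense (⋃ m, (Xm m : Set X)))
    (P : ∀ m, Xm (m + 1) →L[ℝ] Xm m)
    (hPnorm : ∀ m, ‖P m‖ = 1)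
    (hPid : ∀ (m : ℕ) (y : Xm (m + 1)), (y : X) ∈ Xm m → ((P m y : Xm m) : X) = (y : X))
    (m : ℕ) (Qm : X →L[ℝ] Xm m) (hQnorm : ‖Qm‖ = 1)
    (hQid : ∀ x : X, x ∈ Xm m → ((Qm x : X) = x))
    (hQlim : ∀ (k : ℕ) (x : X), x ∈ Xm k → ∃ J : ℕ, ∀ j, J ≤ j →
      ∃ h : x ∈ Xm (m + j), QQ Xm P m j ⟨x, h⟩ = Qm x)
    (L : Xm m →L[ℝ] Xm m) :
    Tendsto (fun j => w Xm hmono P m j L) atTop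
      (𝓝 (nu ((Xm m).subtypeL.comp (L.comp Qm)))) := by
  classical
  set T : X →L[ℝ] X := (Xm m).subtypeL.comp (L.comp Qm) with hT
  -- `Q_{m,j}` agrees with `Q_m` on `X_{m+j}`
  have hstep : ∀ (j i : ℕ) (x : X) (h : x ∈ Xm (m + j)) (h' : x ∈ Xm (m + (j + i))),
      QQ Xm P m (j + i) ⟨x, h'⟩ = QQ Xm P m j ⟨x, h⟩ := by
    intro j i x h
    induction i with
    | zero => intro h'; rfl
    | succ i ih =>
      intro h'
      have hx : x ∈ Xm (m + (j + i)) := hmono (by omega) h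
      rw [← ih hx]
      change QQ Xm P m (j + i) (P (m + (j + i)) ⟨x, h'⟩) = _
      congr 1
      exact Subtype.ext (hPid (m + (j + i)) ⟨x, h'⟩ hx)
  have hQ : ∀ (j : ℕ) (x : Xm (m + j)), QQ Xm P m j x = Qm (x : X) := by
    intro j x
    obtain ⟨J, hJ⟩ := hQlim (m + j) x x.2
    obtain ⟨h, e⟩ := hJ (j + J) (by omega)
    rw [← e, hstep j J x x.2 h]
  have hS : ∀ (j : ℕ) (x : Xm (m + j)),
      ((((incl (hmono (Nat.le_add_right m j))).comp (L.comp (QQ Xm P m j))) x : Xm (m + j)) : X)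
        = T x := by
    intro j x
    change ((L (QQ Xm P m j x) : Xm m) : X) = _
    rw [hQ]; rfl
  have hw0 : ∀ j, 0 ≤ w Xm hmono P m j L := fun j => nu_nonneg _
  -- upper bound
  have hup : ∀ j, w Xm hmono P m j L ≤ nu T := by
    intro j
    refine nu_le _ _ (nu_nonneg _) ?_
    intro x f hx hf hfx
    obtain ⟨g, hg, hgn⟩ := exists_extension_norm_eq (Xm (m + j)) f
    rw [← hg, hS]
    exact le_nu T x g hx (hgn.trans hf) ((hg x).trans hfx)
  have hC : ∀ z, ‖T z‖ ≤ ‖T‖ * ‖z‖ := T.le_opNorm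
  -- lower bound
  have hlow : ∀ c, 0 ≤ c → (∃ᶠ j in atTop, w Xm hmono P m j L ≤ c) → nu T ≤ c := by
    intro c hc0 hfr
    have key : ∀ (t : ℝ) (z : X),
        (1 - |t| * c) * ‖z + t • T z‖ ≤ (1 + t ^ 2 * ‖T‖ ^ 2) * ‖z‖ := by
      intro t
      have hcl : IsClosed {z : X | (1 - |t| * c) * ‖z + t • T z‖ ≤
          (1 + t ^ 2 * ‖T‖ ^ 2) * ‖z‖} := isClosed_le (by fun_prop) (by fun_prop)
      have hsub : (⋃ m, (Xm m : Set X)) ⊆ {z : X | (1 - |t| * c) * ‖z + t • T z‖ ≤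
          (1 + t ^ 2 * ‖T‖ ^ 2) * ‖z‖} := by
        intro z hz
        obtain ⟨k, hk⟩ := Set.mem_iUnion.mp hz
        obtain ⟨j, hkj, hj⟩ := Filter.frequently_atTop.mp hfr k
        have hz' : z ∈ Xm (m + j) := hmono (by omega) hk
        have h := lumer2 _ c ‖T‖ hj (fun y => by
          rw [Submodule.coe_norm, hS]; exact hC y) (norm_nonneg _) t (⟨z, hz'⟩ : Xm (m + j))
        rw [Submodule.coe_norm, Submodule.coe_norm, Submodule.coe_add, Submodule.coe_smul,
          hS] at h
        exact h
      intro z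
      exact hcl.closure_subset_iff.mpr hsub (hdense z)
    refine nu_le _ _ hc0 ?_
    intro x f hx hf hfx
    by_contra hlt
    push Not at hlt
    set a := |f (T x)| with ha
    have hs : ∀ s : ℝ, 0 < s → (1 - s * c) * (1 + s * a) ≤ 1 + s ^ 2 * ‖T‖ ^ 2 := by
      intro s hs
      by_cases hneg : 1 - s * c ≤ 0
      · have h1 : 0 ≤ 1 + s * a := by positivity
        have h2 : 0 ≤ 1 + s ^ 2 * ‖T‖ ^ 2 := by positivity
        nlinarith [mul_nonneg (neg_nonneg.mpr hneg) h1]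
      push Not at hneg
      obtain ⟨t, hts, hta⟩ : ∃ t : ℝ, |t| = s ∧ t * f (T x) = s * a := by
        rcases abs_cases (f (T x)) with ⟨h, -⟩ | ⟨h, -⟩
        · exact ⟨s, abs_of_pos hs, by rw [ha, h]⟩
        · exact ⟨-s, by rw [abs_neg, abs_of_pos hs], by rw [ha, h]; ring⟩
      have h1 := key t x
      rw [hx, mul_one, ← sq_abs t, hts] at h1
      refine le_trans ?_ h1
      refine mul_le_mul_of_nonneg_left ?_ hneg.le
      have h2 := f.le_opNorm (x + t • T x)
      rw [hf, one_mul, map_add, map_smul, hfx, smul_eq_mul, hta] at h2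
      exact (le_abs_self _).trans h2
    have ha0 : 0 ≤ a := abs_nonneg _
    have hD : 0 < a * c + ‖T‖ ^ 2 + 1 := by positivity
    have hs0 : 0 < (a - c) / (a * c + ‖T‖ ^ 2 + 1) := div_pos (by linarith) hD
    have h := hs _ hs0
    have e : (a - c) / (a * c + ‖T‖ ^ 2 + 1) * (a * c + ‖T‖ ^ 2 + 1) = a - c :=
      div_mul_cancel₀ _ hD.ne'
    set s := (a - c) / (a * c + ‖T‖ ^ 2 + 1)
    have h3 : s * (a - c) ≤ s * (s * (a * c + ‖T‖ ^ 2)) := by nlinarith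
    have h4 := le_of_mul_le_mul_left h3 hs0
    nlinarith
  refine tendsto_order.mpr ⟨fun b hb => ?_, fun b hb =>
    Filter.Eventually.of_forall fun j => (hup j).trans_lt hb⟩
  by_contra hcon
  have hfr : ∃ᶠ j in atTop, w Xm hmono P m j L ≤ b := by
    refine (Filter.not_eventually.mp hcon).mono fun j hj => not_lt.mp hj
  obtain ⟨j, hj⟩ := hfr.exists
  exact absurd (hlow b ((hw0 j).trans hj) hfr) (not_le.mpr hb)
end
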